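/- Let u : ℝ^{2C}_{++} → ℝ be continuous and lower unbounded, and let U(x₀,…,x_S) = Σ_{s=1}^S a_s u(x₀,x_s) with a_s ∈ (0,1), Σ a_s = 1. If every upper level set of U in ℝ^{C(S+1)}_{++} is closed in ℝ^{C(S+1)}, then every upper level set of u in ℝ^{2C}_{++} is closed in ℝ^{2C}. -/

import Mathlib

open Set

/-- Every upper level set of `u` on the domain `P`, taken at the level of a point of `P`, is closed
in the ambient space, and not merely relatively closed in `P`: the boundary condition that the
theorem transfers from expected utility to `u`. -/
def HasClosedUpperLevelSets {α β : Type*} [TopologicalSpace α] [Preorder β]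
    (u : α → β) (P : Set α) : Prop :=
  ∀ z ∈ P, IsClosed {x | x ∈ P ∧ u z ≤ u x}

theorem HasClosedUpperLevelSets.comp {α β γ : Type*} [TopologicalSpace α] [TopologicalSpace γ]
    [Preorder β] {u : α → β} {P : Set α} (hu : HasClosedUpperLevelSets u P)
    {f : γ → α} (hf : Continuous f) : HasClosedUpperLevelSets (u ∘ f) (f ⁻¹' P) :=
  fun z hz => (hu (f z) hz).preimage hf

theorem nonempty_of_sum_eq_one {ι R : Type*} [Fintype ι] [Semiring R] [Nontrivial R] {a : ι → R}
    (ha : ∑ i, a i = 1) : Nonempty ι :=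
  Finset.univ_nonempty_iff.mp (Finset.nonempty_of_sum_ne_zero (ha.trans_ne one_ne_zero))

section ExpectedUtility

variable {X R : Type*} {S : ℕ}

/-- The consumption plan `(x, y, …, y)`: `x` in period zero, at index `0`, and `y` in each of the
`S` states, at the indices `s.succ`. -/
def stateIndependentPlan (S : ℕ) (z : X × X) : Fin (S + 1) → X :=
  Fin.cons z.1 fun _ => z.2

/-- The expected utility `U(x₀, …, x_S) = ∑ₛ aₛ u(x₀, xₛ)`, with the `S` states indexed by `Fin S`,
so that `xₛ` is `x s.succ`. -/
def expectedUtility [Semiring R] (a : Fin S → R) (u : X × X → R) (x : Fin (S + 1) → X) : R :=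
  ∑ s, a s * u (x 0, x s.succ)

theorem continuous_stateIndependentPlan [TopologicalSpace X] :
    Continuous (stateIndependentPlan S : X × X → Fin (S + 1) → X) :=
  Continuous.finCons (A := fun _ => X) continuous_fst (continuous_pi fun _ => continuous_snd)

theorem preimage_stateIndependentPlan [Nonempty (Fin S)] (A : Set X) :
    stateIndependentPlan S ⁻¹' {x | ∀ k, x k ∈ A} = A ×ˢ A := by
  ext z
  simp only [stateIndependentPlan, mem_preimage, mem_ofPred_eq, Fin.forall_fin_succ, Fin.cons_zero,
    Fin.cons_succ, forall_const, mem_prod]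

theorem expectedUtility_comp_stateIndependentPlan [Semiring R] {a : Fin S → R}
    (ha : ∑ s, a s = 1) (u : X × X → R) :
    expectedUtility a u ∘ stateIndependentPlan S = u := by
  funext z
  calc ∑ s, a s * u z = (∑ s, a s) * u z := (Finset.sum_mul ..).symm
    _ = u z := by rw [ha, one_mul]

theorem stmt10_general [TopologicalSpace X] [Semiring R] [Nontrivial R] [Preorder R]
    {a : Fin S → R} (ha : ∑ s, a s = 1) {u : X × X → R} {A : Set X}
    (hU : HasClosedUpperLevelSets (expectedUtility a u) {x | ∀ k, x k ∈ A}) :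
    HasClosedUpperLevelSets u (A ×ˢ A) := by
  have : Nonempty (Fin S) := nonempty_of_sum_eq_one ha
  simpa only [expectedUtility_comp_stateIndependentPlan ha, preimage_stateIndependentPlan]
    using hU.comp continuous_stateIndependentPlan

end ExpectedUtility

/-- If u : ℝ^{2C}_{++} → ℝ is continuous, lower unbounded, and all
upper level sets of the expected utility U(x₀,…,x_S) = ∑ₛ aₛ u(x₀,x_s) are closed
in ℝ^{C(S+1)}, then all upper level sets of u are closed in ℝ^{2C}. -/
theorem stmt10 (C S : ℕ) (hC : 1 ≤ C) (hS : 1 ≤ S)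
    (a : Fin S → ℝ) (ha : ∀ s, a s ∈ Set.Ioo (0:ℝ) 1) (hsum : ∑ s, a s = 1)
    (u : ((Fin C → ℝ) × (Fin C → ℝ)) → ℝ)
    (P2 : Set ((Fin C → ℝ) × (Fin C → ℝ)))
    (hP2 : P2 = {p | (∀ i, 0 < p.1 i) ∧ (∀ i, 0 < p.2 i)})
    (PG : Set (Fin (S+1) → (Fin C → ℝ)))
    (hPG : PG = {x | ∀ k i, 0 < x k i})
    (hcont : ContinuousOn u P2)
    (hlb : ∀ r : ℝ, ∃ p ∈ P2, u p < r)
    (hclosedU : ∀ xb ∈ PG, IsClosed {x | x ∈ PG ∧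
      (∑ s : Fin S, a s * u (xb 0, xb s.succ)) ≤ ∑ s : Fin S, a s * u (x 0, x s.succ)}) :
    ∀ zb ∈ P2, IsClosed {z | z ∈ P2 ∧ u zb ≤ u z} := by
  subst hP2 hPG
  exact stmt10_general (A := {v : Fin C → ℝ | ∀ i, 0 < v i}) hsum hclosedU
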